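/- For every sequence ā = (a(1), a(2), …) with 0 ≤ a(i) < 1 for all i, there exists a sequence f : ℕ → ℕ such that for every sequence p̄ obtained from ā by inserting more than f(i) zero terms after the i-th term of ā (for each i), and for every first-order sentence ψ of the language L, the limit lim_{n→∞} Prob(n,p̄;ψ) exists and equals 0 or 1. -/

import Mathlib

open FirstOrder Filter

namespace RandomGraph

/-- The set of potential edges of a graph on `Fin n` (pairs `(v,w)` with `v < w`).
Vertex `v : Fin n` represents the number `v + 1` of the interval `[n] = {1, …, n}`. -/
abbrev EdgeIdx (n : ℕ) := {e : Fin n × Fin n // e.1 < e.2}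

/-- An outcome of the random graph on `[n]`: a choice of which potential edges are present. -/
abbrev Sample (n : ℕ) := EdgeIdx n → Bool

/-- Adjacency of two vertices (described by their values in `Fin n`) in the outcome `ω`. -/
def adjVal {n : ℕ} (ω : Sample n) (a b : ℕ) : Prop :=
  ∃ e : EdgeIdx n, ω e = true ∧
    ((e.1.1.val = a ∧ e.1.2.val = b) ∨ (e.1.1.val = b ∧ e.1.2.val = a))

/-- Adjacency of two vertices in the outcome `ω`. -/
def sampleAdj {n : ℕ} (ω : Sample n) (v w : Fin n) : Prop := adjVal ω v.val w.val

/-- The probability of the outcome `ω` in the model `G(n, p̄)`: each pair of distinct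
vertices at distance `d` is an edge with probability `p d`, independently.  (The value `p 0` is
never used, since distinct vertices are at distance at least 1.) -/
noncomputable def sampleWeight (p : ℕ → ℝ) {n : ℕ} (ω : Sample n) : ℝ :=
  ∏ e : EdgeIdx n,
    (if ω e then p (e.1.2.val - e.1.1.val) else 1 - p (e.1.2.val - e.1.1.val))

/-- The probability of the outcome `ω` in the circular model `C(n, p̄)`: vertices `v, w` are
adjacent with probability `p (min |v-w| (n - |v-w|))`, independently. -/
noncomputable def cWeight (p : ℕ → ℝ) {n : ℕ} (ω : Sample n) : ℝ :=
  ∏ e : EdgeIdx n,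
    (if ω e then p (min (e.1.2.val - e.1.1.val) (n - (e.1.2.val - e.1.1.val)))
      else 1 - p (min (e.1.2.val - e.1.1.val) (n - (e.1.2.val - e.1.1.val))))

open scoped Classical in
/-- The probability of the event `P` in the random graph `G(n, p̄)`. -/
noncomputable def Pr (p : ℕ → ℝ) (n : ℕ) (P : Sample n → Prop) : ℝ :=
  ∑ ω : Sample n, if P ω then sampleWeight p ω else 0

open scoped Classical in
/-- The probability of the event `P` in the circular random graph `C(n, p̄)`. -/
noncomputable def cPr (p : ℕ → ℝ) (n : ℕ) (P : Sample n → Prop) : ℝ :=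
  ∑ ω : Sample n, if P ω then cWeight p ω else 0

/-! ### The language `L` of graphs (also used as the language `L^c`) -/

/-- An outcome `ω` of the random graph, viewed as a structure of `FirstOrder.Language.graph`,
the language with a single binary adjacency predicate. -/
def graphStructure {n : ℕ} (ω : Sample n) : Language.graph.Structure (Fin n) where
  RelMap | .adj => fun x => sampleAdj ω (x 0) (x 1)

/-- Satisfaction of a sentence of the language `L` in the outcome `ω`. -/
def SatL {n : ℕ} (ω : Sample n) (ψ : Language.graph.Sentence) : Prop :=
  @Language.Sentence.Realize _ _ (graphStructure ω) ψ

/-- `Prob(n, p̄; ψ)` for a sentence `ψ` of the language `L`. -/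
noncomputable def ProbL (p : ℕ → ℝ) (n : ℕ) (ψ : Language.graph.Sentence) : ℝ :=
  Pr p n fun ω => SatL ω ψ

/-- The probability that `C(n, p̄)` satisfies a sentence `ψ` of the language `L^c = L`. -/
noncomputable def cProbL (p : ℕ → ℝ) (n : ℕ) (ψ : Language.graph.Sentence) : ℝ :=
  cPr p n fun ω => SatL ω ψ

/-! ### The language `L₊` -/

/-- The constants of the language `L₊`: the first element `1` and the last element `n`. -/
inductive plusFunc : ℕ → Type
  | one : plusFunc 0
  | last : plusFunc 0

/-- The relations of `L₊`: adjacency and successor. -/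
inductive plusRel : ℕ → Type
  | adj : plusRel 2
  | succ : plusRel 2

/-- The language `L₊` with adjacency, successor (`x = y + 1`), and constants `1` and `n`. -/
def Lplus : Language := ⟨plusFunc, plusRel⟩

/-- An outcome `ω` of the random graph on `[m+1]`, as an `L₊`-structure. -/
def plusStructure {m : ℕ} (ω : Sample (m + 1)) : Lplus.Structure (Fin (m + 1)) where
  funMap | .one => fun _ => 0 | .last => fun _ => Fin.last m
  RelMap
    | .adj => fun x => sampleAdj ω (x 0) (x 1)
    | .succ => fun x => (x 0).val = (x 1).val + 1

/-- `Prob(n, p̄; ψ)` for a sentence `ψ` of `L₊` (set to `0` in the irrelevant case `n = 0`,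
where the constants cannot be interpreted). -/
noncomputable def ProbPlus (p : ℕ → ℝ) : ℕ → Lplus.Sentence → ℝ
  | 0, _ => 0
  | (m + 1), ψ => Pr p (m + 1) fun ω => @Language.Sentence.Realize _ _ (plusStructure ω) ψ

/-! ### The language `L≤` -/

/-- The relations of `L≤`: adjacency and linear order. -/
inductive leRel : ℕ → Type
  | adj : leRel 2
  | le : leRel 2

/-- The language `L≤` with adjacency and a linear order. -/
def Lle : Language := ⟨fun _ => Empty, leRel⟩

/-- An outcome `ω` of the random graph on `[n]`, as an `L≤`-structure. -/
def leStructure {n : ℕ} (ω : Sample n) : Lle.Structure (Fin n) where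
  funMap := fun f _ => Empty.elim f
  RelMap
    | .adj => fun x => sampleAdj ω (x 0) (x 1)
    | .le => fun x => x 0 ≤ x 1

/-- Satisfaction of a sentence of `L≤` in the outcome `ω`. -/
def SatLe {n : ℕ} (ω : Sample n) (ψ : Lle.Sentence) : Prop :=
  @Language.Sentence.Realize _ _ (leStructure ω) ψ

/-- `Prob(n, p̄; ψ)` for a sentence `ψ` of `L≤`. -/
noncomputable def ProbLe (p : ℕ → ℝ) (n : ℕ) (ψ : Lle.Sentence) : ℝ :=
  Pr p n fun ω => SatLe ω ψ

/-! ### The circular languages `L₊^c` and `L≤^c` -/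

/-- The relations of `L₊^c`: adjacency and cyclic successor. -/
inductive plusCRel : ℕ → Type
  | adj : plusCRel 2
  | succ : plusCRel 2

/-- The language `L₊^c`, with adjacency and cyclic successor (`x = y + 1 (mod n)`). -/
def LplusC : Language := ⟨fun _ => Empty, plusCRel⟩

/-- An outcome `ω` of the circular random graph on `[n]`, as an `L₊^c`-structure. -/
def plusCStructure {n : ℕ} (ω : Sample n) : LplusC.Structure (Fin n) where
  funMap := fun f _ => Empty.elim f
  RelMap
    | .adj => fun x => sampleAdj ω (x 0) (x 1)
    | .succ => fun x => (x 0).val = ((x 1).val + 1) % n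

/-- The probability that `C(n, p̄)` satisfies a sentence `ψ` of the language `L₊^c`. -/
noncomputable def cProbPlus (p : ℕ → ℝ) (n : ℕ) (ψ : LplusC.Sentence) : ℝ :=
  cPr p n fun ω => @Language.Sentence.Realize _ _ (plusCStructure ω) ψ

/-- The relations of `L≤^c`: adjacency and the ternary clockwise-order predicate. -/
inductive cycRel : ℕ → Type
  | adj : cycRel 2
  | btw : cycRel 3

/-- The language `L≤^c`, with adjacency and the ternary clockwise-order predicate `C`. -/
def Lcyc : Language := ⟨fun _ => Empty, cycRel⟩

/-- `C(a, b, c)`: `a ≤ b ≤ c` holds after some cyclic permutation of `(a, b, c)`. -/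
def cyclicBtw {n : ℕ} (a b c : Fin n) : Prop :=
  (a ≤ b ∧ b ≤ c) ∨ (b ≤ c ∧ c ≤ a) ∨ (c ≤ a ∧ a ≤ b)

/-- An outcome `ω` of the circular random graph on `[n]`, as an `L≤^c`-structure. -/
def cycStructure {n : ℕ} (ω : Sample n) : Lcyc.Structure (Fin n) where
  funMap := fun f _ => Empty.elim f
  RelMap
    | .adj => fun x => sampleAdj ω (x 0) (x 1)
    | .btw => fun x => cyclicBtw (x 0) (x 1) (x 2)

/-- Satisfaction of a sentence of `L≤^c` in the outcome `ω`. -/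
def SatCyc {n : ℕ} (ω : Sample n) (ψ : Lcyc.Sentence) : Prop :=
  @Language.Sentence.Realize _ _ (cycStructure ω) ψ

/-- The probability that `C(n, p̄)` satisfies a sentence `ψ` of the language `L≤^c`. -/
noncomputable def cProbCyc (p : ℕ → ℝ) (n : ℕ) (ψ : Lcyc.Sentence) : ℝ :=
  cPr p n fun ω => SatCyc ω ψ

/-!
Only finitely many graphs, up to equivalence in the Ehrenfeucht–Fraïssé game of `k` rounds, occur
as outcomes of `G(n, p̄)`. Let `U` be the disjoint union of `k` copies of a representative of each
of these classes. An outcome `G` that contains an isolated copy of `U` is equivalent to `U`: both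
split into pieces, every piece of one has at least `k` equivalent partners in the other, and
Duplicator answers inside the partner of the piece in which Spoiler plays. Hence a zero-one law
holds as soon as each fixed possible outcome has an isolated copy in `G(n, p̄)` with probability
tending to `1`.

When `g K ≤ n < g (K + 1)`, only `K` distances carry edges, so a given translate of `U` is an
isolated copy if `O(K)` edges take prescribed values, which has probability at least `β ^ O(K)` with
`β` depending only on `a 1, …, a K`. Each edge matters for boundedly many translates, so there are
order `n / K` independent trials, and `n ≥ g K` may be taken as large in terms of `K` as needed.
-/

section EhrenfeuchtFraisse

variable {V W X : Type*} {G : SimpleGraph V} {H : SimpleGraph W} {K : SimpleGraph X} {k l : ℕ}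
  {S T : SetRel V W}

/-- The pairs in `S` match up vertices of `G` and `H` preserving and reflecting equality and
adjacency: the winning condition for a position `S` of the Ehrenfeucht–Fraïssé game. -/
def IsPartialIso (G : SimpleGraph V) (H : SimpleGraph W) (S : SetRel V W) : Prop :=
  ∀ a ∈ S, ∀ b ∈ S, (a.1 = b.1 ↔ a.2 = b.2) ∧ (G.Adj a.1 b.1 ↔ H.Adj a.2 b.2)

namespace IsPartialIso

theorem anti (hT : IsPartialIso G H T) (hST : S ⊆ T) : IsPartialIso G H S :=
  fun a ha b hb => hT a (hST ha) b (hST hb)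

theorem inv (hS : IsPartialIso G H S) : IsPartialIso H G S.inv :=
  fun _ ha _ hb => ⟨(hS _ ha _ hb).1.symm, (hS _ ha _ hb).2.symm⟩

theorem comp {R : SetRel W X} (hS : IsPartialIso G H S) (hR : IsPartialIso H K R) :
    IsPartialIso G K (S.comp R) := by
  rintro ⟨x, z⟩ ⟨y, hxy, hyz⟩ ⟨x', z'⟩ ⟨y', hxy', hyz'⟩
  have hG := hS _ hxy _ hxy'
  have hH := hR _ hyz _ hyz'
  exact ⟨hG.1.trans hH.1, hG.2.trans hH.2⟩

end IsPartialIso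

theorem setRel_inv_insert (x : V) (y : W) (S : SetRel V W) :
    SetRel.inv (insert (x, y) S) = insert (y, x) S.inv := by
  ext ⟨_, _⟩
  simp [and_comm]

/-- Duplicator wins the Ehrenfeucht–Fraïssé game on `G` and `H` with the given number of rounds
left, starting from the position `S`. -/
def BackForth (G : SimpleGraph V) (H : SimpleGraph W) : ℕ → SetRel V W → Prop
  | 0, S => IsPartialIso G H S
  | k + 1, S => IsPartialIso G H S ∧ (∀ x, ∃ y, BackForth G H k (insert (x, y) S)) ∧
      ∀ y, ∃ x, BackForth G H k (insert (x, y) S)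

namespace BackForth

theorem isPartialIso (h : BackForth G H k S) : IsPartialIso G H S := by
  cases k with
  | zero => exact h
  | succ k => exact h.1

theorem anti (h : BackForth G H k T) (hST : S ⊆ T) : BackForth G H k S := by
  induction k generalizing S T with
  | zero => exact h.anti hST
  | succ k ih =>
    refine ⟨h.1.anti hST, fun x => ?_, fun y => ?_⟩
    · exact (h.2.1 x).imp fun y hy => ih hy (Set.insert_subset_insert hST)
    · exact (h.2.2 y).imp fun x hx => ih hx (Set.insert_subset_insert hST)

theorem of_le (h : BackForth G H l S) (hkl : k ≤ l) : BackForth G H k S := by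
  induction k generalizing l S with
  | zero => exact h.isPartialIso
  | succ k ih =>
    obtain ⟨l, rfl⟩ := Nat.exists_eq_succ_of_ne_zero (Nat.ne_zero_of_lt hkl)
    have hkl : k ≤ l := Nat.le_of_succ_le_succ hkl
    exact ⟨h.1, fun x => (h.2.1 x).imp fun _ hy => ih hy hkl,
      fun y => (h.2.2 y).imp fun _ hx => ih hx hkl⟩

theorem inv (h : BackForth G H k S) : BackForth H G k S.inv := by
  induction k generalizing S with
  | zero => exact IsPartialIso.inv h
  | succ k ih =>
    refine ⟨h.1.inv, fun y => ?_, fun x => ?_⟩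
    · exact (h.2.2 y).imp fun x hx => setRel_inv_insert x y S ▸ ih hx
    · exact (h.2.1 x).imp fun y hy => setRel_inv_insert x y S ▸ ih hy

theorem comp {R : SetRel W X} (hS : BackForth G H k S) (hR : BackForth H K k R) :
    BackForth G K k (S.comp R) := by
  have insert_comp (x : V) (y : W) (z : X) (S : SetRel V W) (R : SetRel W X) :
      insert (x, z) (S.comp R) ⊆ SetRel.comp (insert (x, y) S) (insert (y, z) R) := by
    rintro _ (rfl | ⟨y', hxy, hyz⟩)
    · exact ⟨y, .inl rfl, .inl rfl⟩
    · exact ⟨y', .inr hxy, .inr hyz⟩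
  induction k generalizing S R with
  | zero => exact IsPartialIso.comp hS hR
  | succ k ih =>
    refine ⟨hS.1.comp hR.1, fun x => ?_, fun z => ?_⟩
    · obtain ⟨y, hy⟩ := hS.2.1 x
      obtain ⟨z, hz⟩ := hR.2.1 y
      exact ⟨z, (ih hy hz).anti (insert_comp x y z S R)⟩
    · obtain ⟨y, hy⟩ := hR.2.2 z
      obtain ⟨x, hx⟩ := hS.2.2 y
      exact ⟨x, (ih hx hy).anti (insert_comp x y z S R)⟩

theorem of_iso (e : G ≃g H) (k : ℕ) : BackForth G H k (Set.range fun x => (x, e x)) := by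
  induction k with
  | zero =>
    rintro _ ⟨x, rfl⟩ _ ⟨y, rfl⟩
    exact ⟨e.injective.eq_iff.symm, e.map_adj_iff.symm⟩
  | succ k ih =>
    refine ⟨ih.isPartialIso, fun x => ⟨e x, ?_⟩, fun y => ⟨e.symm y, ?_⟩⟩
    · exact ih.anti (Set.insert_subset ⟨x, rfl⟩ subset_rfl)
    · exact ih.anti (Set.insert_subset ⟨e.symm y, by simp⟩ subset_rfl)

end BackForth

/-- `G` and `H` cannot be told apart by an Ehrenfeucht–Fraïssé game of `k` rounds. -/
def RankEquiv (k : ℕ) (G : SimpleGraph V) (H : SimpleGraph W) : Prop :=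
  BackForth G H k ∅

namespace RankEquiv

theorem of_iso (e : G ≃g H) : RankEquiv k G H :=
  (BackForth.of_iso e k).anti (Set.empty_subset _)

theorem symm (h : RankEquiv k G H) : RankEquiv k H G :=
  BackForth.inv h

theorem trans (hGH : RankEquiv k G H) (hHK : RankEquiv k H K) : RankEquiv k G K :=
  (BackForth.comp hGH hHK).anti (Set.empty_subset _)

end RankEquiv

/-- The quantifier rank of a formula in the language of graphs. -/
def quantifierRank {α : Type*} : ∀ {m : ℕ}, Language.graph.BoundedFormula α m → ℕ
  | _, .falsum => 0
  | _, .equal _ _ => 0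
  | _, .rel _ _ => 0
  | _, .imp φ₁ φ₂ => max (quantifierRank φ₁) (quantifierRank φ₂)
  | _, .all φ => quantifierRank φ + 1

theorem exists_eq_var_of_graph_term {m : ℕ} (t : Language.graph.Term (Empty ⊕ Fin m)) :
    ∃ i : Fin m, t = .var (.inr i) := by
  match t with
  | .var (.inr i) => exact ⟨i, rfl⟩
  | .func f _ => exact isEmptyElim f

theorem BackForth.realize_iff {m : ℕ} (φ : Language.graph.BoundedFormula Empty m)
    (h : BackForth G H k S) (hk : quantifierRank φ ≤ k) {xs : Fin m → V} {ys : Fin m → W}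
    (hS : ∀ i, (xs i, ys i) ∈ S) :
    @Language.BoundedFormula.Realize _ _ G.structure _ _ φ default xs ↔
      @Language.BoundedFormula.Realize _ _ H.structure _ _ φ default ys := by
  induction φ generalizing k S with
  | falsum => exact Iff.rfl
  | equal t₁ t₂ =>
    obtain ⟨i, rfl⟩ := exists_eq_var_of_graph_term t₁
    obtain ⟨j, rfl⟩ := exists_eq_var_of_graph_term t₂
    exact (h.isPartialIso _ (hS i) _ (hS j)).1
  | rel R ts =>
    cases R with
    | adj =>
      obtain ⟨i, hi⟩ := exists_eq_var_of_graph_term (ts 0)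
      obtain ⟨j, hj⟩ := exists_eq_var_of_graph_term (ts 1)
      simpa [Language.BoundedFormula.Realize, Language.Structure.RelMap, hi, hj]
        using (h.isPartialIso _ (hS i) _ (hS j)).2
  | imp φ₁ φ₂ ih₁ ih₂ =>
    simp only [quantifierRank, max_le_iff] at hk
    exact imp_congr (ih₁ h hk.1 hS) (ih₂ h hk.2 hS)
  | @all m φ ih =>
    obtain ⟨k, rfl⟩ := Nat.exists_eq_succ_of_ne_zero (Nat.ne_zero_of_lt hk)
    have hφ : quantifierRank φ ≤ k := Nat.le_of_succ_le_succ hk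
    have snoc_mem (x : V) (y : W) (i : Fin (m + 1)) :
        ((Fin.snoc xs x : Fin (m + 1) → V) i, (Fin.snoc ys y : Fin (m + 1) → W) i) ∈
          insert (x, y) S := by
      cases i using Fin.lastCases <;> simp [hS]
    constructor
    · intro hG y
      obtain ⟨x, hx⟩ := h.2.2 y
      exact (ih hx hφ (snoc_mem x y)).1 (hG x)
    · intro hH x
      obtain ⟨y, hy⟩ := h.2.1 x
      exact (ih hy hφ (snoc_mem x y)).2 (hH y)

theorem RankEquiv.realize_iff {ψ : Language.graph.Sentence}
    (h : RankEquiv (quantifierRank ψ) G H) :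
    @Language.Sentence.Realize _ _ G.structure ψ ↔ @Language.Sentence.Realize _ _ H.structure ψ :=
  BackForth.realize_iff ψ h le_rfl fun i => i.elim0

theorem exists_finite_backForth_types (k n : ℕ) :
    ∃ (T : Type) (_ : Finite T) (τ : ∀ {V : Type} (_ : SimpleGraph V), (Fin n → V) → T),
      ∀ {V W : Type} {G : SimpleGraph V} {H : SimpleGraph W} {u : Fin n → V} {v : Fin n → W},
        τ G u = τ H v → BackForth G H k (Set.range fun i => (u i, v i)) := by
  have isPartialIso_of_eq {n : ℕ} {V W : Type} {G : SimpleGraph V} {H : SimpleGraph W}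
      {u : Fin n → V} {v : Fin n → W}
      (h : (fun i j => (u i = u j, G.Adj (u i) (u j))) =
        fun i j => (v i = v j, H.Adj (v i) (v j))) :
      IsPartialIso G H (Set.range fun i => (u i, v i)) := by
    rintro _ ⟨i, rfl⟩ _ ⟨j, rfl⟩
    simpa using congr_fun₂ h i j
  induction k generalizing n with
  | zero =>
    exact ⟨Fin n → Fin n → Prop × Prop, inferInstance,
      fun G u i j => (u i = u j, G.Adj (u i) (u j)), isPartialIso_of_eq⟩
  | succ k ih =>
    obtain ⟨T, _, τ, hτ⟩ := ih (n + 1)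
    -- A `(k + 1)`-type records the atomic type and the set of `k`-types of one-point extensions.
    refine ⟨(Fin n → Fin n → Prop × Prop) × Set T, inferInstance,
      fun G u => (fun i j => (u i = u j, G.Adj (u i) (u j)),
        Set.range fun x => τ G (Fin.cons x u : Fin (n + 1) → _)), ?_⟩
    intro V W G H u v huv
    obtain ⟨hatom, hext⟩ := Prod.mk.inj huv
    have extend {x : V} {y : W}
        (h : τ G (Fin.cons x u : Fin (n + 1) → V) = τ H (Fin.cons y v : Fin (n + 1) → W)) :
        BackForth G H k (insert (x, y) (Set.range fun i => (u i, v i))) := by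
      refine (hτ h).anti (Set.insert_subset ⟨0, rfl⟩ ?_)
      rintro _ ⟨i, rfl⟩
      exact ⟨i.succ, by simp⟩
    refine ⟨isPartialIso_of_eq hatom, fun x => ?_, fun y => ?_⟩
    · obtain ⟨y, hy⟩ := hext.subset ⟨x, rfl⟩
      exact ⟨y, extend hy.symm⟩
    · obtain ⟨x, hx⟩ := hext.superset ⟨y, rfl⟩
      exact ⟨x, extend hx⟩

theorem exists_finite_rankEquiv_types (k : ℕ) :
    ∃ (T : Type) (_ : Finite T) (τ : ∀ {V : Type}, SimpleGraph V → T),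
      ∀ {V W : Type} {G : SimpleGraph V} {H : SimpleGraph W}, τ G = τ H → RankEquiv k G H := by
  obtain ⟨T, hT, τ, hτ⟩ := exists_finite_backForth_types k 0
  exact ⟨T, hT, fun G => τ G Fin.elim0, fun h => (hτ h).anti (Set.empty_subset _)⟩

end EhrenfeuchtFraisse

section Composition

variable {V W I J : Type*} {G : SimpleGraph V} {H : SimpleGraph W} {c : V → I} {d : W → J}
  {S : SetRel V W} {k m : ℕ}

/-- The part of `G` on the vertices labelled `i` by `c`. -/
abbrev piece (G : SimpleGraph V) (c : V → I) (i : I) : SimpleGraph (c ⁻¹' {i}) :=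
  G.induce (c ⁻¹' {i})

/-- The labelling `c` splits `G` into a disjoint union of its pieces. -/
def Splits (G : SimpleGraph V) (c : V → I) : Prop :=
  ∀ ⦃x y⦄, G.Adj x y → c x = c y

/-- The part of a position `S` played between the pieces labelled `i` and `j`. -/
def restrictPieces (c : V → I) (d : W → J) (i : I) (j : J) (S : SetRel V W) :
    SetRel (c ⁻¹' {i}) (d ⁻¹' {j}) :=
  Prod.map Subtype.val Subtype.val ⁻¹' S

/-- The strategy of Duplicator on disjoint unions: the position `S` pairs up the pieces it touches,
and within each such pair of pieces the game of `m` rounds is won. -/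
structure PiecewiseWin (G : SimpleGraph V) (H : SimpleGraph W) (c : V → I) (d : W → J) (m : ℕ)
    (S : SetRel V W) : Prop where
  label_eq_iff : ∀ a ∈ S, ∀ b ∈ S, c a.1 = c b.1 ↔ d a.2 = d b.2
  backForth : ∀ a ∈ S, BackForth (piece G c (c a.1)) (piece H d (d a.2)) m
    (restrictPieces c d (c a.1) (d a.2) S)

namespace PiecewiseWin

theorem inv (h : PiecewiseWin G H c d m S) : PiecewiseWin H G d c m S.inv where
  label_eq_iff _ ha _ hb := (h.label_eq_iff _ ha _ hb).symm
  backForth _ ha := (h.backForth _ ha).inv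

theorem isPartialIso (hG : Splits G c) (hH : Splits H d) (h : PiecewiseWin G H c d m S) :
    IsPartialIso G H S := by
  intro a ha b hb
  by_cases hab : c a.1 = c b.1
  · have hab' : d a.2 = d b.2 := (h.label_eq_iff a ha b hb).1 hab
    simpa [Subtype.ext_iff] using (h.backForth a ha).isPartialIso
      (⟨a.1, rfl⟩, ⟨a.2, rfl⟩) ha (⟨b.1, hab.symm⟩, ⟨b.2, hab'.symm⟩) hb
  · have hab' : d a.2 ≠ d b.2 := mt (h.label_eq_iff a ha b hb).2 hab
    exact ⟨iff_of_false (fun h => hab (congrArg c h)) (fun h => hab' (congrArg d h)),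
      iff_of_false (fun h => hab (hG h)) (fun h => hab' (hH h))⟩

theorem insert_pair {x : V} {y : W} (h : PiecewiseWin G H c d m S)
    (hlabel : ∀ a ∈ S, c a.1 = c x ↔ d a.2 = d y)
    (hxy : BackForth (piece G c (c x)) (piece H d (d y)) m
      (insert (⟨x, rfl⟩, ⟨y, rfl⟩) (restrictPieces c d (c x) (d y) S))) :
    PiecewiseWin G H c d m (insert (x, y) S) where
  label_eq_iff := by
    rintro a (rfl | ha) b (rfl | hb)
    · simp
    · simpa only [eq_comm] using hlabel b hb
    · exact hlabel a ha
    · exact h.label_eq_iff a ha b hb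
  backForth := by
    have hpiece : BackForth (piece G c (c x)) (piece H d (d y)) m
        (restrictPieces c d (c x) (d y) (insert (x, y) S)) := by
      refine hxy.anti ?_
      rintro ⟨⟨x', hx'⟩, ⟨y', hy'⟩⟩ (hnew | hold)
      · exact .inl (by simpa [Subtype.ext_iff] using hnew)
      · exact .inr hold
    rintro a (rfl | ha)
    · exact hpiece
    by_cases hax : c a.1 = c x
    · rw [hax, (hlabel a ha).1 hax]
      exact hpiece
    · refine (h.backForth a ha).anti ?_
      rintro ⟨⟨x', hx'⟩, ⟨y', hy'⟩⟩ (hnew | hold)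
      · obtain ⟨rfl, rfl⟩ := Prod.mk.inj hnew
        exact absurd hx'.symm hax
      · exact hold

theorem exists_label (h : PiecewiseWin G H c d (m + 1) S) (hmk : m + 1 ≤ k) (hS : S.encard < k)
    (x : V) (hx : k ≤ {j | RankEquiv k (piece G c (c x)) (piece H d j)}.encard) :
    ∃ j, (∀ a ∈ S, c a.1 = c x ↔ d a.2 = j) ∧
      BackForth (piece G c (c x)) (piece H d j) (m + 1) (restrictPieces c d (c x) j S) := by
  by_cases hold : ∃ a ∈ S, c a.1 = c x
  · obtain ⟨a, ha, hax⟩ := hold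
    exact ⟨d a.2, hax ▸ fun b hb => h.label_eq_iff b hb a ha, hax ▸ h.backForth a ha⟩
  · push Not at hold
    -- Spoiler opens a new piece, and `H` has more pieces of that type than `S` has touched.
    obtain ⟨j, hj, hjS⟩ : ({j | RankEquiv k (piece G c (c x)) (piece H d j)} \
        (fun a => d a.2) '' S).Nonempty := by
      refine Set.sdiff_nonempty.2 fun hsub => ?_
      exact (hx.trans ((Set.encard_le_encard hsub).trans (Set.encard_image_le _ _))).not_gt hS
    have unused : ∀ a ∈ S, d a.2 ≠ j := fun a ha haj => hjS ⟨a, ha, haj⟩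
    refine ⟨j, fun a ha => iff_of_false (hold a ha) (unused a ha),
      (BackForth.of_le hj hmk).anti ?_⟩
    rintro ⟨⟨x', hx'⟩, ⟨y', hy'⟩⟩ ha
    exact unused _ ha hy'

theorem forth (h : PiecewiseWin G H c d (m + 1) S) (hS : (m + 1 : ℕ) + S.encard ≤ k)
    (hk : ∀ i, k ≤ {j | RankEquiv k (piece G c i) (piece H d j)}.encard) (x : V) :
    ∃ y, PiecewiseWin G H c d m (insert (x, y) S) := by
  have hmk : m + 1 ≤ k := by exact_mod_cast le_self_add.trans hS
  have hSk : S.encard < k := by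
    have hfin : S.encard ≠ ⊤ := ne_top_of_le_ne_top (ENat.natCast_ne_top k) (le_add_self.trans hS)
    exact (ENat.lt_add_left hfin (by simp)).trans_le hS
  obtain ⟨j, hlabel, hj⟩ := h.exists_label hmk hSk x (hk _)
  obtain ⟨⟨y, rfl⟩, hy⟩ := hj.2.1 ⟨x, rfl⟩
  have hm : PiecewiseWin G H c d m S :=
    ⟨h.label_eq_iff, fun a ha => (h.backForth a ha).of_le m.le_succ⟩
  exact ⟨y, hm.insert_pair hlabel hy⟩

theorem toBackForth (hG : Splits G c) (hH : Splits H d)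
    (hGH : ∀ i, k ≤ {j | RankEquiv k (piece G c i) (piece H d j)}.encard)
    (hHG : ∀ j, k ≤ {i | RankEquiv k (piece H d j) (piece G c i)}.encard)
    (h : PiecewiseWin G H c d m S) (hS : m + S.encard ≤ k) : BackForth G H m S := by
  induction m generalizing S with
  | zero => exact h.isPartialIso hG hH
  | succ m ih =>
    have encard_insert (a : V × W) : m + (insert a S).encard ≤ k := by
      grw [Set.encard_insert_le, add_comm S.encard, ← add_assoc]
      exact_mod_cast hS
    refine ⟨h.isPartialIso hG hH, fun x => ?_, fun y => ?_⟩
    · obtain ⟨y, hy⟩ := h.forth hS hGH x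
      exact ⟨y, ih hy (encard_insert _)⟩
    · have hSinv : (m + 1 : ℕ) + S.inv.encard ≤ k := by
        rwa [SetRel.inv, Set.encard_preimage_of_bijective Prod.swap_bijective]
      obtain ⟨x, hx⟩ := h.inv.forth hSinv hHG y
      exact ⟨x, ih (setRel_inv_insert y x S.inv ▸ hx.inv) (encard_insert _)⟩

end PiecewiseWin

theorem RankEquiv.of_pieces (hG : Splits G c) (hH : Splits H d)
    (hGH : ∀ i, k ≤ {j | RankEquiv k (piece G c i) (piece H d j)}.encard)
    (hHG : ∀ j, k ≤ {i | RankEquiv k (piece H d j) (piece G c i)}.encard) : RankEquiv k G H :=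
  PiecewiseWin.toBackForth hG hH hGH hHG ⟨by simp, by simp⟩ (by simp)

end Composition

section UniversalGraph

variable {V W ι : Type*}

/-- The disjoint union of a family of graphs. -/
def disjointUnion {V : ι → Type*} (G : ∀ i, SimpleGraph (V i)) : SimpleGraph (Σ i, V i) :=
  ⨆ i, (G i).map (Function.Embedding.sigmaMk i)

theorem disjointUnion_adj {V : ι → Type*} {G : ∀ i, SimpleGraph (V i)} {a b : Σ i, V i} :
    (disjointUnion G).Adj a b ↔ ∃ i x y, (G i).Adj x y ∧ ⟨i, x⟩ = a ∧ ⟨i, y⟩ = b := by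
  simp [disjointUnion, SimpleGraph.map_adj]

/-- The inclusion of a graph into a disjoint union. -/
def disjointUnionEmbedding {V : ι → Type*} (G : ∀ i, SimpleGraph (V i)) (i : ι) :
    G i ↪g disjointUnion G where
  toEmbedding := .sigmaMk i
  map_rel_iff' := by
    intro x y
    rw [disjointUnion_adj]
    constructor
    · rintro ⟨i, x, y, hxy, ⟨⟩, ⟨⟩⟩
      exact hxy
    · exact fun hxy => ⟨i, x, y, hxy, rfl, rfl⟩

/-- `G` is isomorphic to a finite graph on natural numbers that uses only edges of nonzero
probability under `p`. -/
def Realizable (p : ℕ → ℝ) (G : SimpleGraph V) : Prop :=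
  Finite V ∧ ∃ f : V ↪ ℕ, ∀ x y, f x < f y → G.Adj x y → p (f y - f x) ≠ 0

namespace Realizable

variable {p : ℕ → ℝ}

theorem induce {G : SimpleGraph V} (hG : Realizable p G) (s : Set V) :
    Realizable p (G.induce s) := by
  obtain ⟨_, f, hf⟩ := hG
  exact ⟨inferInstance, (Function.Embedding.subtype _).trans f, fun x y => hf x y⟩

theorem disjointUnion [Finite ι] {V : ι → Type*} {G : ∀ i, SimpleGraph (V i)}
    (hG : ∀ i, Realizable p (G i)) : Realizable p (disjointUnion G) := by
  have _ i : Finite (V i) := (hG i).1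
  choose f hf using fun i => (hG i).2
  obtain ⟨e, he⟩ := exists_injective_nat ι
  obtain ⟨D, hD⟩ : ∃ D, ∀ a : Σ i, V i, f a.1 a.2 < D := by
    obtain ⟨D, hD⟩ := (Set.finite_range fun a : Σ i, V i => f a.1 a.2).bddAbove
    exact ⟨D + 1, fun a => Nat.lt_succ_of_le (hD ⟨a, rfl⟩)⟩
  -- The graphs are placed in disjoint intervals of length `D`.
  let F : (Σ i, V i) → ℕ := fun a => D * e a.1 + f a.1 a.2
  have F_div a : F a / D = e a.1 := by
    rw [Nat.mul_add_div (Nat.zero_lt_of_lt (hD a)), Nat.div_eq_of_lt (hD a), add_zero]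
  have hF : F.Injective := by
    rintro ⟨i, x⟩ ⟨j, y⟩ hxy
    obtain rfl : i = j := he (by rw [← F_div ⟨i, x⟩, ← F_div ⟨j, y⟩, hxy])
    exact congrArg _ ((f i).injective (Nat.add_left_cancel hxy))
  refine ⟨inferInstance, ⟨F, hF⟩, fun a b hab hadj => ?_⟩
  obtain ⟨i, x, y, hxy, rfl, rfl⟩ := disjointUnion_adj.1 hadj
  simp only [Function.Embedding.coeFn_mk, F, add_lt_add_iff_left, Nat.add_sub_add_left] at hab ⊢
  exact hf i x y hab hxy

end Realizable

/-- `φ` embeds `U` into `G` as an induced subgraph with no further edges leaving it. -/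
def IsIsolatedCopy (U : SimpleGraph V) (G : SimpleGraph W) (φ : V ↪ W) : Prop :=
  ∀ x w, G.Adj (φ x) w ↔ (U.map φ).Adj (φ x) w

theorem isIsolatedCopy_refl (U : SimpleGraph V) : IsIsolatedCopy U U (.refl V) := by
  simp [IsIsolatedCopy, SimpleGraph.map_adj]

/-- The embedding of graphs underlying an isolated copy. -/
def IsIsolatedCopy.toGraphEmbedding {U : SimpleGraph V} {G : SimpleGraph W} {φ : V ↪ W}
    (h : IsIsolatedCopy U G φ) : U ↪g G where
  toEmbedding := φ
  map_rel_iff' := by simp [h _ _]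

/-- For a copy `φ` of a disjoint union in another graph, the labelling of that graph by the index
of the summand, with the label `none` for all vertices outside of the copy. -/
noncomputable def copyLabel {V : ι → Type*} (φ : (Σ i, V i) ↪ W) : W → Option ι :=
  Function.extend φ (fun a => some a.1) fun _ => none

theorem copyLabel_eq_some_iff {V : ι → Type*} {φ : (Σ i, V i) ↪ W} {w : W} {i : ι} :
    copyLabel φ w = some i ↔ ∃ x, φ ⟨i, x⟩ = w := by
  by_cases hw : ∃ a, φ a = w
  · obtain ⟨⟨j, x⟩, rfl⟩ := hw
    simp only [copyLabel, φ.injective.extend_apply, Option.some_inj, φ.apply_eq_iff_eq]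
    exact ⟨by rintro rfl; exact ⟨x, rfl⟩, by rintro ⟨y, ⟨⟩⟩; rfl⟩
  · rw [copyLabel, Function.extend_apply' _ _ _ hw]
    simpa using fun x hx => hw ⟨_, hx⟩

namespace IsIsolatedCopy

variable {V : ι → Type*} {A : ∀ i, SimpleGraph (V i)} {G : SimpleGraph W} {φ : (Σ i, V i) ↪ W}

theorem copyLabel_eq_some_of_adj (h : IsIsolatedCopy (disjointUnion A) G φ) {v w : W} {i : ι}
    (hvw : G.Adj v w) (hv : copyLabel φ v = some i) : copyLabel φ w = some i := by
  obtain ⟨x, rfl⟩ := copyLabel_eq_some_iff.1 hv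
  obtain ⟨a, b, hab, ha, rfl⟩ := (SimpleGraph.map_adj ..).1 ((h _ _).1 hvw)
  obtain ⟨j, y, z, -, rfl, rfl⟩ := disjointUnion_adj.1 hab
  obtain ⟨⟩ := φ.injective ha
  exact copyLabel_eq_some_iff.2 ⟨z, rfl⟩

theorem splits (h : IsIsolatedCopy (disjointUnion A) G φ) : Splits G (copyLabel φ) :=
  fun _ _ hvw => Option.ext fun _ =>
    ⟨h.copyLabel_eq_some_of_adj hvw, h.copyLabel_eq_some_of_adj hvw.symm⟩

theorem rankEquiv_piece (h : IsIsolatedCopy (disjointUnion A) G φ) (k : ℕ) (i : ι) :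
    RankEquiv k (A i) (piece G (copyLabel φ) (some i)) := by
  let f : A i ↪g G := h.toGraphEmbedding.comp (disjointUnionEmbedding A i)
  have hrange : Set.range f = copyLabel φ ⁻¹' {some i} :=
    Set.ext fun w => copyLabel_eq_some_iff.symm
  rw [piece, ← hrange]
  exact .of_iso f.isoInduceRange

end IsIsolatedCopy

theorem exists_finite_rankEquiv_representatives (p : ℕ → ℝ) (k : ℕ) :
    ∃ (T : Type) (_ : Finite T) (V : T → Type) (A : ∀ t, SimpleGraph (V t)),
      (∀ t, Realizable p (A t)) ∧
        ∀ {W : Type} (G : SimpleGraph W), Realizable p G → ∃ t, RankEquiv k G (A t) := by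
  obtain ⟨T, _, τ, hτ⟩ := exists_finite_rankEquiv_types k
  choose V A hA hAτ using
    fun t : {t : T // ∃ (V : Type) (G : SimpleGraph V), Realizable p G ∧ τ G = t} => t.2
  exact ⟨_, inferInstance, V, A, hA, fun G hG => ⟨⟨τ G, _, G, hG, rfl⟩, hτ (hAτ ⟨τ G, _⟩).symm⟩⟩

/-- A realizable graph `U` is `k`-universal if all realizable graphs containing an isolated copy
of `U` are equivalent to it in the game of `k` rounds. -/
def IsUniversal (p : ℕ → ℝ) (k : ℕ) {V : Type} (U : SimpleGraph V) : Prop :=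
  Realizable p U ∧ ∀ {W : Type} {G : SimpleGraph W}, Realizable p G →
    (∃ φ, IsIsolatedCopy U G φ) → RankEquiv k G U

theorem exists_isUniversal (p : ℕ → ℝ) (k : ℕ) :
    ∃ (V : Type) (U : SimpleGraph V), IsUniversal p k U := by
  obtain ⟨T, _, V, A, hA, hrep⟩ := exists_finite_rankEquiv_representatives p k
  let U : SimpleGraph (Σ i : T × Fin k, V i.1) := disjointUnion fun i => A i.1
  have hU : Realizable p U := .disjointUnion fun i => hA i.1
  have many_pieces {W W' : Type} {B : SimpleGraph W'} {G : SimpleGraph W} {φ}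
      (hB : Realizable p B) (hφ : IsIsolatedCopy U G φ) :
      k ≤ {j | RankEquiv k B (piece G (copyLabel φ) j)}.encard := by
    obtain ⟨t, ht⟩ := hrep B hB
    have hsub : Set.range (fun s : Fin k => some (t, s)) ⊆
        {j | RankEquiv k B (piece G (copyLabel φ) j)} := by
      rintro _ ⟨s, rfl⟩
      exact ht.trans (hφ.rankEquiv_piece k (t, s))
    refine le_trans (le_of_eq ?_) (Set.encard_le_encard hsub)
    have hinj : (fun s : Fin k => some (t, s)).Injective := fun s s' h => by simpa using h
    rw [← Set.image_univ, hinj.encard_image, Set.encard_univ, ENat.card_eq_coe_fintype_card,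
      Fintype.card_fin]
  refine ⟨_, U, hU, fun {W G} hG ⟨φ, hφ⟩ => ?_⟩
  have hrefl := isIsolatedCopy_refl U
  exact .of_pieces hφ.splits hrefl.splits (fun i => many_pieces (hG.induce _) hrefl)
    fun j => many_pieces (hU.induce _) hφ

end UniversalGraph

section IndependentTrials

open MeasureTheory ProbabilityTheory Finset

theorem exists_pairwiseDisjoint_subfamily {τ α : Type*} [DecidableEq α]
    {s : τ → Finset α} {A B : ℕ} (N : ℕ) {F : Finset τ} (hA : ∀ t ∈ F, #(s t) ≤ A)
    (hB : ∀ a, #{t ∈ F | a ∈ s t} ≤ B) (hN : N * (A * B + 1) ≤ #F) :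
    ∃ F' ⊆ F, #F' = N ∧ (F' : Set τ).PairwiseDisjoint s := by
  classical
  induction N generalizing F with
  | zero => exact ⟨∅, empty_subset F, rfl, by simp⟩
  | succ N ih =>
    obtain ⟨t, ht⟩ : F.Nonempty := card_pos.1 (by grind)
    -- Discard `t` and every member of the family that meets `s t`.
    let bad : Finset τ := insert t ((s t).biUnion fun a => {t' ∈ F | a ∈ s t'})
    have card_bad : #bad ≤ A * B + 1 := by
      grw [card_insert_le, card_biUnion_le_card_mul _ _ _ fun a _ => hB a, hA t ht]
    obtain ⟨F', hF'F, hF'card, hF'disj⟩ := ih (F := F \ bad)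
      (fun t' ht' => hA t' (sdiff_subset ht'))
      (fun a => (card_le_card (filter_subset_filter _ sdiff_subset)).trans (hB a))
      (by grind [le_card_sdiff bad F])
    have ht_notMem : t ∉ F' := fun h => (mem_sdiff.1 (hF'F h)).2 (mem_insert_self t _)
    refine ⟨insert t F', insert_subset ht (hF'F.trans sdiff_subset),
      by rw [card_insert_of_notMem ht_notMem, hF'card], ?_⟩
    rw [coe_insert, Set.pairwiseDisjoint_insert]
    refine ⟨hF'disj, fun t' ht' _ => disjoint_left.2 fun a hat hat' => ?_⟩
    obtain ⟨ht'F, ht'bad⟩ := mem_sdiff.1 (hF'F ht')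
    exact ht'bad (mem_insert_of_mem (mem_biUnion.2 ⟨a, hat, mem_filter.2 ⟨ht'F, hat'⟩⟩))

theorem iIndepSet_pi_of_pairwise_disjoint {τ ι : Type*} [Fintype ι]
    {α : ι → Type*} [∀ i, MeasurableSpace (α i)] {μ : ∀ i, Measure (α i)}
    [∀ i, IsProbabilityMeasure (μ i)] {s : τ → Finset ι} {B : ∀ _ : τ, ∀ i, Set (α i)}
    (hs : Pairwise (Function.onFun Disjoint s)) (hB : ∀ t i, MeasurableSet (B t i)) :
    iIndepSet (fun t => (s t : Set ι).pi (B t)) (Measure.pi μ) := by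
  classical
  refine (iIndepSet_iff_meas_biInter fun t => .pi (s t).countable_toSet fun i _ => hB t i).2
    fun F => ?_
  have inter_eq : ⋂ t ∈ F, (s t : Set ι).pi (B t) =
      ((F.biUnion s : Finset ι) : Set ι).pi fun i => ⋂ t ∈ F, ⋂ _ : i ∈ s t, B t i := by
    ext ω
    simp only [Set.mem_iInter, Set.mem_pi, mem_coe, mem_biUnion]
    exact ⟨fun h i _ t ht hi => h t ht i hi, fun h t ht i hi => h i ⟨t, ht, hi⟩ t ht hi⟩
  have inter_eq_self {t : τ} (ht : t ∈ F) {i : ι} (hi : i ∈ s t) :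
      ⋂ t' ∈ F, ⋂ _ : i ∈ s t', B t' i = B t i := by
    have unique {t' : τ} (hi' : i ∈ s t') : t' = t :=
      by_contra fun hne => disjoint_left.1 (hs hne) hi' hi
    ext x
    simp only [Set.mem_iInter]
    exact ⟨fun h => h t ht hi, fun h t' _ hi' => unique hi' ▸ h⟩
  rw [inter_eq, Measure.pi_pi_finset, prod_biUnion fun _ _ _ _ hne => hs hne]
  refine prod_congr rfl fun t ht => ?_
  rw [Measure.pi_pi_finset]
  exact prod_congr rfl fun i hi => by rw [inter_eq_self ht hi]

theorem measureReal_iInter_compl_le_exp {τ Ω : Type*} [Fintype τ] [MeasurableSpace Ω]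
    {μ : Measure Ω} {A : τ → Set Ω} (hA : ∀ t, MeasurableSet (A t)) (hind : iIndepSet A μ)
    {δ : ℝ} (hδ : ∀ t, δ ≤ μ.real (A t)) :
    μ.real (⋂ t, (A t)ᶜ) ≤ Real.exp (-(Fintype.card τ * δ)) := by
  have := hind.isProbabilityMeasure
  have hprod : μ (⋂ t, (A t)ᶜ) = ∏ t, μ (A t)ᶜ :=
    ((iIndepSet_iff_iIndep A μ).1 hind).meas_iInter fun t =>
      (MeasurableSpace.measurableSet_generateFrom (Set.mem_singleton _)).compl
  calc μ.real (⋂ t, (A t)ᶜ) = ∏ t, (1 - μ.real (A t)) := by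
        simp_rw [measureReal_def, hprod, ENNReal.toReal_prod, ← measureReal_def,
          probReal_compl_eq_one_sub (hA _)]
    _ ≤ ∏ _t : τ, Real.exp (-δ) := by
        refine prod_le_prod (fun t _ => sub_nonneg.2 measureReal_le_one) fun t _ => ?_
        linarith [Real.add_one_le_exp (-δ), hδ t]
    _ = Real.exp (-(Fintype.card τ * δ)) := by
        rw [prod_const, card_univ, ← Real.exp_nat_mul, mul_neg]

theorem measureReal_iInter_compl_pi_le_exp {τ ι : Type*} [Fintype τ] [Fintype ι] [DecidableEq ι]
    {α : ι → Type*} [∀ i, MeasurableSpace (α i)] {μ : ∀ i, Measure (α i)}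
    [∀ i, IsProbabilityMeasure (μ i)] {s : τ → Finset ι} {B : ∀ _ : τ, ∀ i, Set (α i)}
    (hB : ∀ t i, MeasurableSet (B t i)) {β : ℝ} (hβ₀ : 0 ≤ β) (hβ₁ : β ≤ 1)
    (hβ : ∀ t, ∀ i ∈ s t, β ≤ (μ i).real (B t i)) {A D N : ℕ} (hA : ∀ t, #(s t) ≤ A)
    (hD : ∀ i, #{t | i ∈ s t} ≤ D) (hN : N * (A * D + 1) ≤ Fintype.card τ) :
    (Measure.pi μ).real (⋂ t, ((s t : Set ι).pi (B t))ᶜ) ≤ Real.exp (-(N * β ^ A)) := by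
  classical
  obtain ⟨F, -, rfl, hF⟩ := exists_pairwiseDisjoint_subfamily N (F := univ) (fun t _ => hA t) hD hN
  have hind : iIndepSet (fun t : F => (s t : Set ι).pi (B t)) (Measure.pi μ) :=
    iIndepSet_pi_of_pairwise_disjoint (fun t t' hne => hF t.2 t'.2 (Subtype.coe_ne_coe.2 hne))
      fun t => hB t
  have hbox (t : F) : β ^ A ≤ (Measure.pi μ).real ((s t : Set ι).pi (B t)) :=
    calc β ^ A ≤ β ^ #(s t) := pow_le_pow_of_le_one hβ₀ hβ₁ (hA t)
      _ = ∏ _i ∈ s t, β := (prod_const β).symm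
      _ ≤ ∏ i ∈ s t, (μ i).real (B t i) := prod_le_prod (fun _ _ => hβ₀) fun i hi => hβ t i hi
      _ = (Measure.pi μ).real ((s t : Set ι).pi (B t)) := by
        simp_rw [measureReal_def, Measure.pi_pi_finset, ENNReal.toReal_prod]
  calc (Measure.pi μ).real (⋂ t, ((s t : Set ι).pi (B t))ᶜ)
      ≤ (Measure.pi μ).real (⋂ t : F, ((s t : Set ι).pi (B t))ᶜ) :=
        measureReal_mono (Set.subset_iInter fun t => Set.iInter_subset _ t.1)
    _ ≤ Real.exp (-(#F * β ^ A)) := by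
        simpa using measureReal_iInter_compl_le_exp
          (fun t : F => .pi (s t).countable_toSet fun i _ => hB t i) hind hbox

end IndependentTrials

section RandomGraphMeasure

open MeasureTheory ProbabilityTheory

variable {p : ℕ → ℝ} {n : ℕ}

/-- The distance of the two end points of a potential edge. -/
def edgeLength (e : EdgeIdx n) : ℕ := e.1.2.val - e.1.1.val

theorem one_le_edgeLength (e : EdgeIdx n) : 1 ≤ edgeLength e :=
  Nat.sub_pos_of_lt e.2

theorem edgeLength_lt (e : EdgeIdx n) : edgeLength e < n :=
  (Nat.sub_le _ _).trans_lt e.1.2.2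

/-- The distribution of the indicator of a potential edge `e`. Values of `p` outside of `[0, 1]` are
replaced by the nearest point of `[0, 1]`. -/
noncomputable def edgeMeasure (p : ℕ → ℝ) (e : EdgeIdx n) : Measure Bool :=
  bernoulliMeasure true false (Set.projIcc 0 1 zero_le_one (p (edgeLength e)))

instance (e : EdgeIdx n) : IsProbabilityMeasure (edgeMeasure p e) := by
  unfold edgeMeasure
  infer_instance

/-- The distribution of the random graph `G(n, p̄)`. -/
noncomputable def sampleMeasure (p : ℕ → ℝ) (n : ℕ) : Measure (Sample n) :=
  Measure.pi (edgeMeasure p)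

instance : IsProbabilityMeasure (sampleMeasure p n) := by
  unfold sampleMeasure
  infer_instance

theorem edgeMeasure_real_singleton (hp : ∀ j, 1 ≤ j → p j ∈ Set.Icc 0 1) (e : EdgeIdx n)
    (b : Bool) :
    (edgeMeasure p e).real {b} = if b then p (edgeLength e) else 1 - p (edgeLength e) := by
  have hproj := Set.projIcc_of_mem zero_le_one (hp _ (one_le_edgeLength e))
  cases b <;> simp [edgeMeasure, hproj]

theorem sampleMeasure_real_singleton (hp : ∀ j, 1 ≤ j → p j ∈ Set.Icc 0 1) (ω : Sample n) :
    (sampleMeasure p n).real {ω} = sampleWeight p ω := by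
  rw [sampleMeasure, measureReal_def, Measure.pi_singleton, ENNReal.toReal_prod, sampleWeight]
  exact Finset.prod_congr rfl fun e _ => edgeMeasure_real_singleton hp e (ω e)

theorem Pr_eq_sampleMeasure_real (hp : ∀ j, 1 ≤ j → p j ∈ Set.Icc 0 1) (P : Sample n → Prop) :
    Pr p n P = (sampleMeasure p n).real {ω | P ω} := by
  classical
  rw [Pr, ← Finset.sum_filter, ← Finset.coe_filter_univ, ← sum_measureReal_singleton]
  exact Finset.sum_congr (by congr) fun ω _ => (sampleMeasure_real_singleton hp ω).symm

theorem ae_edgeLength_ne_zero (hp : ∀ j, 1 ≤ j → p j ∈ Set.Icc 0 1) :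
    ∀ᵐ ω ∂sampleMeasure p n, ∀ e, ω e = true → p (edgeLength e) ≠ 0 := by
  refine ae_all_iff.2 fun e => ?_
  by_cases he : p (edgeLength e) = 0
  · have hedge : ∀ᵐ b ∂edgeMeasure p e, b ≠ true := by
      rw [ae_iff, ← measureReal_eq_zero_iff]
      simpa [he] using edgeMeasure_real_singleton hp e true
    filter_upwards [Measure.tendsto_eval_ae_ae.eventually hedge] with ω hω h
    exact absurd h hω
  · exact .of_forall fun _ _ => he

/-- An outcome of the random graph as a graph. -/
def sampleGraph (ω : Sample n) : SimpleGraph (Fin n) where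
  Adj := sampleAdj ω
  symm := ⟨fun _ _ ⟨e, he, hvw⟩ => ⟨e, he, hvw.symm⟩⟩
  loopless := ⟨fun _ ⟨e, _, hvv⟩ => e.2.ne (Fin.ext (by omega))⟩

theorem sampleGraph_adj (ω : Sample n) (e : EdgeIdx n) :
    (sampleGraph ω).Adj e.1.1 e.1.2 ↔ ω e = true := by
  refine ⟨?_, fun he => ⟨e, he, .inl ⟨rfl, rfl⟩⟩⟩
  rintro ⟨e', he', ⟨h₁, h₂⟩ | ⟨h₁, h₂⟩⟩
  · obtain rfl : e' = e := Subtype.ext (Prod.ext (Fin.ext h₁) (Fin.ext h₂))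
    exact he'
  · have := e.2
    have := e'.2
    omega

theorem satL_iff_realize_sampleGraph (ω : Sample n) (ψ : Language.graph.Sentence) :
    SatL ω ψ ↔ @Language.Sentence.Realize _ _ (sampleGraph ω).structure ψ := by
  have : graphStructure ω = (sampleGraph ω).structure := by
    ext
    case funMap f _ => exact isEmptyElim f
    case RelMap R _ => cases R; rfl
  rw [SatL, this]

theorem realizable_sampleGraph {ω : Sample n} (hω : ∀ e, ω e = true → p (edgeLength e) ≠ 0) :
    Realizable p (sampleGraph ω) :=
  ⟨inferInstance, Fin.valEmbedding, fun v w hvw hadj =>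
    hω ⟨(v, w), hvw⟩ ((sampleGraph_adj ω ⟨(v, w), hvw⟩).1 hadj)⟩

/-- The outcomes whose graph has an isolated copy of `U`. -/
def HasIsolatedCopy {V : Type} (U : SimpleGraph V) (ω : Sample n) : Prop :=
  ∃ φ, IsIsolatedCopy U (sampleGraph ω) φ

theorem ae_satL_iff_of_isUniversal (hp : ∀ j, 1 ≤ j → p j ∈ Set.Icc 0 1)
    {ψ : Language.graph.Sentence} {V : Type} {U : SimpleGraph V}
    (hU : IsUniversal p (quantifierRank ψ) U) :
    ∀ᵐ ω ∂sampleMeasure p n, HasIsolatedCopy U ω →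
      (SatL ω ψ ↔ @Language.Sentence.Realize _ _ U.structure ψ) := by
  filter_upwards [ae_edgeLength_ne_zero hp] with ω hω hcopy
  rw [satL_iff_realize_sampleGraph]
  exact (hU.2 (realizable_sampleGraph hω) hcopy).realize_iff

theorem tendsto_probL_zero_or_one (hp : ∀ j, 1 ≤ j → p j ∈ Set.Icc 0 1)
    (hcopy : ∀ {V : Type} (U : SimpleGraph V), Realizable p U →
      Tendsto (fun n => (sampleMeasure p n).real {ω | ¬ HasIsolatedCopy U ω}) atTop (nhds 0))
    (ψ : Language.graph.Sentence) :
    Tendsto (fun n => ProbL p n ψ) atTop (nhds 0) ∨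
      Tendsto (fun n => ProbL p n ψ) atTop (nhds 1) := by
  obtain ⟨V, U, hU⟩ := exists_isUniversal p (quantifierRank ψ)
  have hprob : (fun n => ProbL p n ψ) = fun n => (sampleMeasure p n).real {ω | SatL ω ψ} :=
    funext fun n => Pr_eq_sampleMeasure_real hp _
  by_cases hψ : @Language.Sentence.Realize _ _ U.structure ψ
  · right
    have hle n : (sampleMeasure p n).real {ω | SatL ω ψ}ᶜ ≤
        (sampleMeasure p n).real {ω | ¬ HasIsolatedCopy U ω} :=
      ENNReal.toReal_mono (measure_ne_top _ _) <| measure_mono_ae <| by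
        filter_upwards [ae_satL_iff_of_isUniversal hp hU] with ω hω hsat hcopy
        exact hsat ((hω hcopy).2 hψ)
    have hlim := squeeze_zero (fun _ => measureReal_nonneg) hle (hcopy U hU.1)
    simp_rw [hprob]
    simpa [probReal_compl_eq_one_sub (Set.toFinite _).measurableSet] using hlim.const_sub 1
  · left
    rw [hprob]
    refine squeeze_zero (fun _ => measureReal_nonneg) (fun n => ?_) (hcopy U hU.1)
    refine ENNReal.toReal_mono (measure_ne_top _ _) (measure_mono_ae ?_)
    filter_upwards [ae_satL_iff_of_isUniversal hp hU] with ω hω hsat hcopy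
    exact hψ ((hω hcopy).1 hsat)

end RandomGraphMeasure

section IsolatedCopies

open MeasureTheory Finset

variable {p : ℕ → ℝ} {n : ℕ} {V τ : Type*}

open scoped Classical in
/-- The distances at which vertices of `G(n, p̄)` can be adjacent. -/
noncomputable def activeLengths (p : ℕ → ℝ) (n : ℕ) : Finset ℕ :=
  {j ∈ Ico 1 n | p j ≠ 0}

theorem mem_activeLengths {j : ℕ} : j ∈ activeLengths p n ↔ (1 ≤ j ∧ j < n) ∧ p j ≠ 0 := by
  simp [activeLengths]

theorem edgeLength_mem_activeLengths {e : EdgeIdx n} (he : p (edgeLength e) ≠ 0) :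
    edgeLength e ∈ activeLengths p n :=
  mem_activeLengths.2 ⟨⟨one_le_edgeLength e, edgeLength_lt e⟩, he⟩

open scoped Classical in
/-- The potential edges at the vertex `v` that are present with nonzero probability. -/
noncomputable def activeEdgesAt (p : ℕ → ℝ) (v : Fin n) : Finset (EdgeIdx n) :=
  {e | p (edgeLength e) ≠ 0 ∧ (e.1.1 = v ∨ e.1.2 = v)}

theorem mem_activeEdgesAt {v : Fin n} {e : EdgeIdx n} :
    e ∈ activeEdgesAt p v ↔ p (edgeLength e) ≠ 0 ∧ (e.1.1 = v ∨ e.1.2 = v) := by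
  simp [activeEdgesAt]

theorem card_activeEdgesAt_le (p : ℕ → ℝ) (v : Fin n) :
    #(activeEdgesAt p v) ≤ 2 * #(activeLengths p n) := by
  classical
  rw [activeEdgesAt]
  simp_rw [and_or_left]
  rw [filter_or, two_mul]
  refine (card_union_le _ _).trans (add_le_add ?_ ?_) <;>
    refine card_le_card_of_injOn edgeLength
      (fun e he => edgeLength_mem_activeLengths (mem_filter.1 he).2.1) fun e he e' he' hlen => ?_
  all_goals
    have hv := (mem_filter.1 he).2.2
    have hv' := (mem_filter.1 he').2.2
    have := e.2
    have := e'.2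
    simp only [edgeLength] at hlen
    exact Subtype.ext (Prod.ext (by omega) (by omega))

open scoped Classical in
/-- The potential edges of nonzero probability that meet the image of `φ`. These decide whether `φ`
is an isolated copy of a given graph. -/
noncomputable def copyEdges [Fintype V] (p : ℕ → ℝ) (φ : V ↪ Fin n) : Finset (EdgeIdx n) :=
  univ.biUnion fun x => activeEdgesAt p (φ x)

theorem mem_copyEdges [Fintype V] {φ : V ↪ Fin n} {e : EdgeIdx n} :
    e ∈ copyEdges p φ ↔ p (edgeLength e) ≠ 0 ∧ ((∃ x, φ x = e.1.1) ∨ ∃ x, φ x = e.1.2) := by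
  simp only [copyEdges, mem_biUnion, mem_univ, true_and, mem_activeEdgesAt, exists_and_left,
    exists_or, eq_comm]

theorem card_copyEdges_le [Fintype V] (p : ℕ → ℝ) (φ : V ↪ Fin n) :
    #(copyEdges p φ) ≤ Fintype.card V * (2 * #(activeLengths p n)) :=
  card_biUnion_le_card_mul _ _ _ fun x _ => card_activeEdgesAt_le p (φ x)

theorem card_filter_exists_apply_eq_le [Fintype V] [Fintype τ] {α : Type*} [DecidableEq α]
    {φ : τ → V → α} (hφ : ∀ x, (fun t => φ t x).Injective) (a : α) :
    #{t | ∃ x, φ t x = a} ≤ Fintype.card V := by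
  classical
  have hunion : ({t | ∃ x, φ t x = a} : Finset τ) = univ.biUnion fun x => {t | φ t x = a} := by
    ext t
    simp
  rw [hunion, ← mul_one (Fintype.card V)]
  refine card_biUnion_le_card_mul _ _ _ fun x _ => card_le_one.2 fun t ht t' ht' => hφ x ?_
  exact (mem_filter.1 ht).2.trans (mem_filter.1 ht').2.symm

open scoped Classical in
theorem card_filter_mem_copyEdges_le [Fintype V] [Fintype τ] {φ : τ → V ↪ Fin n}
    (hφ : ∀ x, (fun t => φ t x).Injective) (e : EdgeIdx n) :
    #{t | e ∈ copyEdges p (φ t)} ≤ 2 * Fintype.card V := by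
  have hsub : ({t | e ∈ copyEdges p (φ t)} : Finset τ) ⊆
      ({t | (∃ x, φ t x = e.1.1) ∨ ∃ x, φ t x = e.1.2} : Finset τ) :=
    monotone_filter_right _ fun t _ ht => (mem_copyEdges.1 ht).2
  grw [hsub, filter_or, card_union_le, card_filter_exists_apply_eq_le hφ,
    card_filter_exists_apply_eq_le hφ, two_mul]

/-- The placement `φ` of the graph `U` uses only edges of nonzero probability under `p`. -/
def IsPlacement (p : ℕ → ℝ) (U : SimpleGraph V) (φ : V ↪ Fin n) : Prop :=
  ∀ x y, φ x < φ y → U.Adj x y → p (φ y - φ x) ≠ 0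

theorem IsPlacement.edgeLength_ne_zero {U : SimpleGraph V} {φ : V ↪ Fin n}
    (hφ : IsPlacement p U φ) {e : EdgeIdx n} (he : (U.map φ).Adj e.1.1 e.1.2) :
    p (edgeLength e) ≠ 0 := by
  obtain ⟨x, y, hxy, hx, hy⟩ := (SimpleGraph.map_adj ..).1 he
  rw [edgeLength, ← hx, ← hy]
  exact hφ x y (hx ▸ hy ▸ e.2) hxy

theorem IsPlacement.isIsolatedCopy [Fintype V] {U : SimpleGraph V} {φ : V ↪ Fin n}
    (hφ : IsPlacement p U φ) {ω : Sample n} (hω : ∀ e, ω e = true → p (edgeLength e) ≠ 0)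
    (hcopy : ∀ e ∈ copyEdges p φ, ω e = true ↔ (U.map φ).Adj e.1.1 e.1.2) :
    IsIsolatedCopy U (sampleGraph ω) φ := by
  have adj_iff (e : EdgeIdx n) (he : (∃ x, φ x = e.1.1) ∨ ∃ x, φ x = e.1.2) :
      (sampleGraph ω).Adj e.1.1 e.1.2 ↔ (U.map φ).Adj e.1.1 e.1.2 := by
    rw [sampleGraph_adj]
    by_cases hlen : p (edgeLength e) = 0
    · exact iff_of_false (fun h => hω e h hlen) (fun h => hφ.edgeLength_ne_zero h hlen)
    · exact hcopy e (mem_copyEdges.2 ⟨hlen, he⟩)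
  intro x w
  rcases lt_trichotomy (φ x) w with hlt | rfl | hlt
  · exact adj_iff ⟨(φ x, w), hlt⟩ (.inl ⟨x, rfl⟩)
  · simp only [SimpleGraph.irrefl]
  · rw [SimpleGraph.adj_comm, SimpleGraph.adj_comm (U.map φ)]
    exact adj_iff ⟨(w, φ x), hlt⟩ (.inr ⟨x, rfl⟩)

theorem measureReal_not_hasIsolatedCopy_le_of_placements (hp : ∀ j, 1 ≤ j → p j ∈ Set.Icc 0 1)
    {V : Type} [Fintype V] [Fintype τ] {U : SimpleGraph V} {φ : τ → V ↪ Fin n}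
    (hU : ∀ t, IsPlacement p U (φ t)) (hφ : ∀ x, (fun t => φ t x).Injective) {β : ℝ}
    (hβ₀ : 0 ≤ β) (hβ₁ : β ≤ 1) (hβ : ∀ j ∈ activeLengths p n, β ≤ p j ∧ β ≤ 1 - p j) {K N : ℕ}
    (hK : #(activeLengths p n) ≤ K)
    (hN : N * (Fintype.card V * (2 * K) * (2 * Fintype.card V) + 1) ≤ Fintype.card τ) :
    (sampleMeasure p n).real {ω | ¬ HasIsolatedCopy U ω} ≤
      Real.exp (-(N * β ^ (Fintype.card V * (2 * K)))) := by
  classical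
  let target (t : τ) (e : EdgeIdx n) : Set Bool := {decide ((U.map (φ t)).Adj e.1.1 e.1.2)}
  have htarget (t : τ) (e : EdgeIdx n) (he : e ∈ copyEdges p (φ t)) :
      β ≤ (edgeMeasure p e).real (target t e) := by
    obtain ⟨h₁, h₀⟩ := hβ _ (edgeLength_mem_activeLengths (mem_copyEdges.1 he).1)
    rw [edgeMeasure_real_singleton hp]
    split_ifs <;> assumption
  have hsub : {ω | ¬ HasIsolatedCopy U ω} ≤ᵐ[sampleMeasure p n]
      ⋂ t, ((copyEdges p (φ t) : Set (EdgeIdx n)).pi (target t))ᶜ := by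
    filter_upwards [ae_edgeLength_ne_zero hp] with ω hω hno
    refine Set.mem_iInter.2 fun t hmem => hno ⟨φ t, (hU t).isIsolatedCopy hω fun e he => ?_⟩
    rw [Set.mem_singleton_iff.1 (hmem e he), decide_eq_true_iff]
  refine (ENNReal.toReal_mono (measure_ne_top _ _) (measure_mono_ae hsub)).trans ?_
  exact measureReal_iInter_compl_pi_le_exp (fun _ _ => .singleton _) hβ₀ hβ₁ htarget
    (fun t => (card_copyEdges_le p (φ t)).trans (by gcongr)) (card_filter_mem_copyEdges_le hφ) hN

/-- The map `f` shifted by `t`. -/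
def translate {m M : ℕ} (f : V ↪ ℕ) (hf : ∀ x, f x < M) (hmn : m + M ≤ n) (t : Fin m) :
    V ↪ Fin n where
  toFun x := ⟨t + f x, by have := hf x; omega⟩
  inj' x y hxy := f.injective (Nat.add_left_cancel (Fin.mk.inj hxy))

theorem isPlacement_translate {U : SimpleGraph V} {m M : ℕ} {f : V ↪ ℕ}
    (hU : ∀ x y, f x < f y → U.Adj x y → p (f y - f x) ≠ 0) (hf : ∀ x, f x < M)
    (hmn : m + M ≤ n) (t : Fin m) : IsPlacement p U (translate f hf hmn t) := by
  intro x y hxy hadj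
  have translate_val z : (translate f hf hmn t z : ℕ) = t + f z := rfl
  rw [Fin.lt_def, translate_val, translate_val, add_lt_add_iff_left] at hxy
  rw [translate_val, translate_val, Nat.add_sub_add_left]
  exact hU x y hxy hadj

theorem measureReal_not_hasIsolatedCopy_le_of_translates (hp : ∀ j, 1 ≤ j → p j ∈ Set.Icc 0 1)
    {V : Type} [Fintype V] {U : SimpleGraph V} {f : V ↪ ℕ}
    (hU : ∀ x y, f x < f y → U.Adj x y → p (f y - f x) ≠ 0) {M : ℕ} (hM : ∀ x, f x < M) {β : ℝ}
    (hβ₀ : 0 ≤ β) (hβ₁ : β ≤ 1) (hβ : ∀ j ∈ activeLengths p n, β ≤ p j ∧ β ≤ 1 - p j) {K N : ℕ}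
    (hK : #(activeLengths p n) ≤ K)
    (hN : N * (Fintype.card V * (2 * K) * (2 * Fintype.card V) + 1) + M ≤ n) :
    (sampleMeasure p n).real {ω | ¬ HasIsolatedCopy U ω} ≤
      Real.exp (-(N * β ^ (Fintype.card V * (2 * K)))) :=
  measureReal_not_hasIsolatedCopy_le_of_placements hp (isPlacement_translate hU hM hN)
    (fun _ _ _ h => Fin.ext (Nat.add_right_cancel (Fin.mk.inj h))) hβ₀ hβ₁ hβ hK
    (Fintype.card_fin _).ge

end IsolatedCopies

section SparseLengths

open MeasureTheory Finset

variable {a p β : ℕ → ℝ} {g N : ℕ → ℕ} {n K : ℕ}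

/-- `p` arises from `a` by moving the `i`-th term of `a` to position `g i`, for all `i ≥ 1`, and
filling up with zeros. -/
structure IsSpread (a : ℕ → ℝ) (g : ℕ → ℕ) (p : ℕ → ℝ) : Prop where
  strictMonoOn : StrictMonoOn g (Set.Ici 1)
  apply_eq : ∀ i, 1 ≤ i → p (g i) = a i
  eq_zero : ∀ j, 1 ≤ j → (∀ i, 1 ≤ i → g i ≠ j) → p j = 0

namespace IsSpread

theorem apply_mem_Icc (h : IsSpread a g p) (ha : ∀ i, 0 ≤ a i ∧ a i < 1) (j : ℕ) (hj : 1 ≤ j) :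
    p j ∈ Set.Icc 0 1 := by
  by_cases hi : ∃ i, 1 ≤ i ∧ g i = j
  · obtain ⟨i, hi, rfl⟩ := hi
    rw [h.apply_eq i hi]
    exact ⟨(ha i).1, (ha i).2.le⟩
  · push Not at hi
    simp [h.eq_zero j hj hi]

theorem activeLengths_subset (h : IsSpread a g p) (hn : n ≤ g (K + 1)) :
    activeLengths p n ⊆ (Icc 1 K).image g := by
  intro j hj
  obtain ⟨⟨hj₁, hjn⟩, hpj⟩ := mem_activeLengths.1 hj
  obtain ⟨i, hi, rfl⟩ : ∃ i, 1 ≤ i ∧ g i = j := by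
    contrapose! hpj
    exact h.eq_zero j hj₁ hpj
  have hiK : i < K + 1 := (h.strictMonoOn.lt_iff_lt hi (Nat.le_add_left 1 K)).1 (hjn.trans_le hn)
  exact mem_image_of_mem g (mem_Icc.2 ⟨hi, Nat.le_of_lt_succ hiK⟩)

theorem card_activeLengths_le (h : IsSpread a g p) (hn : n ≤ g (K + 1)) :
    #(activeLengths p n) ≤ K := by
  grw [h.activeLengths_subset hn, card_image_le, Nat.card_Icc, Nat.add_sub_cancel]

end IsSpread

/-- While only the terms `a 1, …, a K` are active, every potential edge of nonzero
probability takes either value with probability at least `β`, and `N` independent trials, each of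
which prescribes at most `K ^ 2` such edges, have at least `K` successes on average. -/
structure IsTrialBound (a : ℕ → ℝ) (K : ℕ) (β : ℝ) (N : ℕ) : Prop where
  pos : 0 < β
  le_one : β ≤ 1
  le_apply : ∀ i ≤ K, a i ≠ 0 → β ≤ a i ∧ β ≤ 1 - a i
  le_mul_pow : K ≤ N * β ^ K ^ 2

theorem exists_pos_le_apply (ha : ∀ i, 0 ≤ a i ∧ a i < 1) (K : ℕ) :
    ∃ β : ℝ, 0 < β ∧ β ≤ 1 ∧ ∀ i ≤ K, a i ≠ 0 → β ≤ a i ∧ β ≤ 1 - a i := by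
  have exists_pos (x : ℝ) (hx : 0 ≤ x ∧ x < 1) : ∃ γ : ℝ, 0 < γ ∧ (x ≠ 0 → γ ≤ x ∧ γ ≤ 1 - x) := by
    by_cases h : x = 0
    · exact ⟨1, one_pos, absurd h⟩
    · exact ⟨min x (1 - x), lt_min (hx.1.lt_of_ne' h) (sub_pos.2 hx.2),
        fun _ => ⟨min_le_left _ _, min_le_right _ _⟩⟩
  choose γ hγ₀ hγ using fun i => exists_pos (a i) (ha i)
  let β := (range (K + 1)).inf' nonempty_range_add_one fun i => min 1 (γ i)
  have hβ i (hi : i ≤ K) : β ≤ min 1 (γ i) := inf'_le _ (mem_range_succ_iff.2 hi)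
  refine ⟨β, ?_, (hβ 0 K.zero_le).trans (min_le_left _ _), fun i hi hai => ?_⟩
  · exact (lt_inf'_iff _).2 fun i _ => lt_min one_pos (hγ₀ i)
  · have hβγ : β ≤ γ i := (hβ i hi).trans (min_le_right _ _)
    exact ⟨hβγ.trans (hγ i hai).1, hβγ.trans (hγ i hai).2⟩

theorem exists_isTrialBound (ha : ∀ i, 0 ≤ a i ∧ a i < 1) (K : ℕ) :
    ∃ β N, IsTrialBound a K β N := by
  obtain ⟨β, hβ₀, hβ₁, hβ⟩ := exists_pos_le_apply ha K
  obtain ⟨N, hN⟩ := exists_nat_ge ((K : ℝ) / β ^ K ^ 2)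
  exact ⟨β, N, hβ₀, hβ₁, hβ, (div_le_iff₀ (by positivity)).1 hN⟩

theorem IsTrialBound.measureReal_not_hasIsolatedCopy_le {β : ℝ} {N : ℕ}
    (hβN : IsTrialBound a K β N) (ha : ∀ i, 0 ≤ a i ∧ a i < 1) (hp : IsSpread a g p)
    (hn₀ : N * K ^ 2 + K ≤ n) (hn₁ : n ≤ g (K + 1)) {V : Type} [Fintype V] {U : SimpleGraph V}
    {f : V ↪ ℕ} (hU : ∀ x y, f x < f y → U.Adj x y → p (f y - f x) ≠ 0) {M : ℕ}
    (hM : ∀ x, f x < M) (hK : 4 * Fintype.card V ^ 2 + M + 1 ≤ K) :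
    (sampleMeasure p n).real {ω | ¬ HasIsolatedCopy U ω} ≤ Real.exp (-K) := by
  have hβ : ∀ j ∈ activeLengths p n, β ≤ p j ∧ β ≤ 1 - p j := by
    intro j hj
    obtain ⟨i, hi, rfl⟩ := mem_image.1 (hp.activeLengths_subset hn₁ hj)
    have hpi := hp.apply_eq i (mem_Icc.1 hi).1
    rw [hpi]
    exact hβN.le_apply i (mem_Icc.1 hi).2 (hpi ▸ (mem_activeLengths.1 hj).2)
  have hroom : N * (Fintype.card V * (2 * K) * (2 * Fintype.card V) + 1) + M ≤ n := by
    have : Fintype.card V * (2 * K) * (2 * Fintype.card V) + 1 ≤ K ^ 2 := by nlinarith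
    grw [this]
    omega
  have hexp : Fintype.card V * (2 * K) ≤ K ^ 2 := by
    have : 2 * Fintype.card V ≤ K := by nlinarith
    nlinarith
  calc (sampleMeasure p n).real {ω | ¬ HasIsolatedCopy U ω}
      ≤ Real.exp (-(N * β ^ (Fintype.card V * (2 * K)))) :=
        measureReal_not_hasIsolatedCopy_le_of_translates (hp.apply_mem_Icc ha) hU hM hβN.pos.le
          hβN.le_one hβ (hp.card_activeLengths_le hn₁) hroom
    _ ≤ Real.exp (-K) := by
        gcongr
        exact hβN.le_mul_pow.trans (mul_le_mul_of_nonneg_left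
          (pow_le_pow_of_le_one hβN.pos.le hβN.le_one hexp) N.cast_nonneg)

theorem exists_tendsto_atTop_le_lt {g : ℕ → ℕ} (hg : ∀ i, 1 ≤ i → i ≤ g i) :
    ∃ κ : ℕ → ℕ, Tendsto κ atTop atTop ∧ ∀ᶠ n in atTop, g (κ n) ≤ n ∧ n < g (κ n + 1) := by
  let κ n := Nat.findGreatest (fun k => g k ≤ n) n
  refine ⟨κ, tendsto_atTop.2 fun b => ?_, ?_⟩
  · filter_upwards [eventually_ge_atTop b, eventually_ge_atTop (g b)] with n hbn hgn
    exact Nat.le_findGreatest hbn hgn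
  · filter_upwards [eventually_ge_atTop 1, eventually_ge_atTop (g 1)] with n hn hgn
    refine ⟨Nat.findGreatest_spec (P := fun k => g k ≤ n) hn hgn, ?_⟩
    by_contra! hle
    exact (Nat.le_findGreatest ((hg _ (Nat.le_add_left 1 _)).trans hle) hle).not_gt
      (Nat.lt_succ_self (κ n))

theorem IsSpread.tendsto_not_hasIsolatedCopy (hp : IsSpread a g p)
    (ha : ∀ i, 0 ≤ a i ∧ a i < 1) (hβN : ∀ K, IsTrialBound a K (β K) (N K))
    (hg : ∀ K, 2 ≤ K → N K * K ^ 2 + K ≤ g K) (hg₁ : 1 ≤ g 1) {V : Type} (U : SimpleGraph V)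
    (hU : Realizable p U) :
    Tendsto (fun n => (sampleMeasure p n).real {ω | ¬ HasIsolatedCopy U ω}) atTop (nhds 0) := by
  obtain ⟨_, f, hf⟩ := hU
  have := Fintype.ofFinite V
  obtain ⟨M, hM⟩ : ∃ M, ∀ x, f x < M := by
    obtain ⟨M, hM⟩ := (Set.finite_range f).bddAbove
    exact ⟨M + 1, fun x => Nat.lt_succ_of_le (hM ⟨x, rfl⟩)⟩
  have le_g i (hi : 1 ≤ i) : i ≤ g i := by
    rcases hi.eq_or_lt with rfl | hi
    · exact hg₁
    · exact le_add_self.trans (hg i hi)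
  obtain ⟨κ, hκ, hbracket⟩ := exists_tendsto_atTop_le_lt le_g
  have hexp : Tendsto (fun n => Real.exp (-(κ n))) atTop (nhds 0) :=
    Real.tendsto_exp_neg_atTop_nhds_zero.comp (tendsto_natCast_atTop_atTop.comp hκ)
  refine squeeze_zero' (.of_forall fun _ => measureReal_nonneg) ?_ hexp
  filter_upwards [hbracket, hκ.eventually_ge_atTop 2,
    hκ.eventually_ge_atTop (4 * Fintype.card V ^ 2 + M + 1)] with n hn hκ₂ hκM
  exact (hβN _).measureReal_not_hasIsolatedCopy_le ha hp ((hg _ hκ₂).trans hn.1) hn.2.le hf hM hκM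

end SparseLengths

/-- For every sequence `ā` with `0 ≤ a i < 1` there is `f : ℕ → ℕ` such that
for every sequence `p̄` obtained from `ā` by inserting more than `f i` zero terms after the
`i`-th term of `ā` (the `i`-th term of `ā` being placed at position `g i`, with `g 1 = 1`),
a zero-one law holds for every sentence of the language `L`. -/
theorem statement_2 (a : ℕ → ℝ) (ha : ∀ i, 0 ≤ a i ∧ a i < 1) :
    ∃ f : ℕ → ℕ, ∀ (g : ℕ → ℕ) (p : ℕ → ℝ),
      g 1 = 1 →
      (∀ i, 1 ≤ i → g i + f i + 1 < g (i + 1)) →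
      (∀ i, 1 ≤ i → p (g i) = a i) →
      (∀ j, 1 ≤ j → (∀ i, 1 ≤ i → g i ≠ j) → p j = 0) →
      ∀ ψ : Language.graph.Sentence,
        Tendsto (fun n => ProbL p n ψ) atTop (nhds 0) ∨
          Tendsto (fun n => ProbL p n ψ) atTop (nhds 1) := by
  choose β N hβN using exists_isTrialBound ha
  refine ⟨fun i => N (i + 1) * (i + 1) ^ 2 + (i + 1), fun g p hg₁ hgap hpg hzero ψ => ?_⟩
  have hp : IsSpread a g p :=
    ⟨strictMonoOn_of_lt_add_one Set.ordConnected_Ici fun i _ hi _ => by grind, hpg, hzero⟩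
  have hg : ∀ K, 2 ≤ K → N K * K ^ 2 + K ≤ g K := by
    intro K hK
    obtain ⟨i, rfl⟩ := Nat.exists_eq_add_of_le' (one_le_two.trans hK)
    have : g i + (N (i + 1) * (i + 1) ^ 2 + (i + 1)) + 1 < g (i + 1) := hgap i (by omega)
    omega
  exact tendsto_probL_zero_or_one (hp.apply_mem_Icc ha)
    (hp.tendsto_not_hasIsolatedCopy ha hβN hg hg₁.ge) ψ

end RandomGraph
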